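/- arXiv:2604.06513 — 2 statements merged into one kernel-verified Lean document; each statement's English description precedes it below -/
import Mathlib

section
/- Let G be a finite group and S a nonempty subset of G with S ∩ S⁻¹ = ∅. Let A be the G×G complex matrix with A x y = 1 if y * x⁻¹ ∈ S and A x y = 0 otherwise (the adjacency matrix of the Cayley digraph X(G,S)). Then A has at least one non-real eigenvalue: there exists λ in spectrum ℂ A with Im(λ) ≠ 0. -/
open scoped Classical

/-!
If the spectrum of `A` were real, the eigenvalues of `A ^ 2` would all be nonnegative, so their
sum `trace (A ^ 2)` would dominate each of them. But `S ∩ S⁻¹ = ∅` excludes closed walks of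
length two, so `trace (A ^ 2) = 0`, while the out-degree `|S|` is a nonzero eigenvalue of `A`.
-/

section Matrix

open scoped ComplexOrder

variable {n R : Type*} [Fintype n]

theorem trace_mul_eq_zero_of_forall_mul_eq_zero [NonUnitalNonAssocSemiring R] {A B : Matrix n n R}
    (h : ∀ i j, A i j * B j i = 0) : (A * B).trace = 0 := by
  simp only [Matrix.trace, Matrix.diag_apply, Matrix.mul_apply, h, Finset.sum_const_zero]

variable [DecidableEq n]

theorem mem_spectrum_of_forall_row_sum_eq [Nonempty n] [CommRing R] [Nontrivial R]
    {A : Matrix n n R} {c : R} (h : ∀ i, ∑ j, A i j = c) : c ∈ spectrum R A := by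
  have mulVec_one_eq : A.mulVec 1 = c • 1 := by
    ext i
    simp [Matrix.mulVec, dotProduct_one, h]
  have one_hasEigenvector : Module.End.HasEigenvector A.toLin' c 1 :=
    ⟨Module.End.mem_eigenspace_iff.mpr mulVec_one_eq, one_ne_zero⟩
  rw [← Matrix.spectrum_toLin']
  exact (Module.End.hasEigenvalue_of_hasEigenvector one_hasEigenvector).mem_spectrum

theorem le_trace_of_mem_spectrum_of_spectrum_nonneg {A : Matrix n n ℂ}
    (hA : ∀ z ∈ spectrum ℂ A, 0 ≤ z) {c : ℂ} (hc : c ∈ spectrum ℂ A) : c ≤ A.trace := by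
  have mem_roots_iff (z : ℂ) : z ∈ A.charpoly.roots ↔ z ∈ spectrum ℂ A := by
    rw [Polynomial.mem_roots A.charpoly_monic.ne_zero, Matrix.mem_spectrum_iff_isRoot_charpoly]
  rw [Matrix.trace_eq_sum_roots_charpoly]
  exact Multiset.single_le_sum (fun z hz => hA z ((mem_roots_iff z).mp hz)) c
    ((mem_roots_iff c).mpr hc)

theorem sq_le_trace_sq_of_mem_spectrum_of_spectrum_real {A : Matrix n n ℂ}
    (hA : ∀ z ∈ spectrum ℂ A, z.im = 0) {c : ℂ} (hc : c ∈ spectrum ℂ A) :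
    c ^ 2 ≤ (A ^ 2).trace := by
  refine le_trace_of_mem_spectrum_of_spectrum_nonneg ?_ (spectrum.pow_mem_pow A 2 hc)
  rw [spectrum.map_pow_of_pos A two_pos]
  rintro _ ⟨z, hz, rfl⟩
  exact Complex.sq_nonneg_iff.mpr (hA z hz)

theorem exists_mem_spectrum_im_ne_zero_of_trace_sq_eq_zero {A : Matrix n n ℂ}
    (htrace : (A ^ 2).trace = 0) {c : ℂ} (hc : c ∈ spectrum ℂ A) (hc₀ : c ≠ 0) :
    ∃ z ∈ spectrum ℂ A, z.im ≠ 0 := by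
  by_contra! hreal
  have c_sq_nonneg : 0 ≤ c ^ 2 := Complex.sq_nonneg_iff.mpr (hreal c hc)
  have c_sq_nonpos : c ^ 2 ≤ 0 :=
    htrace ▸ sq_le_trace_sq_of_mem_spectrum_of_spectrum_real hreal hc
  exact pow_ne_zero 2 hc₀ (le_antisymm c_sq_nonpos c_sq_nonneg)

end Matrix

open scoped Pointwise in
theorem indicator_one_mul_indicator_one_inv_eq_zero {G R : Type*} [Inv G] [MulZeroOneClass R]
    {S : Set G} (hS : Disjoint S S⁻¹) (g : G) :
    S.indicator (1 : G → R) g * S.indicator 1 g⁻¹ = 0 := by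
  by_cases hg : g ∈ S
  · have inv_notMem : g⁻¹ ∉ S := hS.notMem_of_mem_left hg
    rw [Set.indicator_of_notMem inv_notMem, mul_zero]
  · rw [Set.indicator_of_notMem hg, zero_mul]

theorem sum_indicator_one_ne_zero {α R : Type*} [Fintype α] [NonAssocSemiring R] [CharZero R]
    {S : Set α} (hS : S.Nonempty) : ∑ a, S.indicator (1 : α → R) a ≠ 0 := by
  obtain ⟨s, hs⟩ := hS
  simp only [Set.indicator_apply, Pi.one_apply, Finset.sum_boole, Nat.cast_ne_zero]
  exact Finset.card_ne_zero_of_mem (Finset.mem_filter.mpr ⟨Finset.mem_univ s, hs⟩)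

theorem cayley_digraph_antisymmetric_has_nonreal_eigenvalue
    {G : Type*} [Group G] [Fintype G] [DecidableEq G]
    (S : Set G) (hS : S.Nonempty) (hanti : S ∩ S⁻¹ = ∅)
    (A : Matrix G G ℂ)
    (hA : ∀ x y : G, A x y = if y * x⁻¹ ∈ S then 1 else 0) :
    ∃ z ∈ spectrum ℂ A, z.im ≠ 0 := by
  have apply_eq_indicator (x y : G) : A x y = S.indicator 1 (y * x⁻¹) := by
    rw [hA, Set.indicator_apply, Pi.one_apply]
  have no_two_cycle (x y : G) : A x y * A y x = 0 := by
    simpa only [apply_eq_indicator, mul_inv_rev, inv_inv] using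
      indicator_one_mul_indicator_one_inv_eq_zero (R := ℂ)
        (Set.disjoint_iff_inter_eq_empty.mpr hanti) (y * x⁻¹)
  have trace_sq_eq_zero : (A ^ 2).trace = 0 := by
    rw [sq, trace_mul_eq_zero_of_forall_mul_eq_zero no_two_cycle]
  have row_sum_eq (x : G) : ∑ y, A x y = ∑ g, S.indicator (1 : G → ℂ) g := by
    simp only [apply_eq_indicator]
    exact Equiv.sum_comp (Equiv.mulRight x⁻¹) (S.indicator 1)
  exact exists_mem_spectrum_im_ne_zero_of_trace_sq_eq_zero trace_sq_eq_zero
    (mem_spectrum_of_forall_row_sum_eq row_sum_eq) (sum_indicator_one_ne_zero hS)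
end

section
/- Let p be an odd prime, q = p^m with m ≥ 1, and k a positive divisor of q−1 with v₂(k) = v₂(q−1) (so that Γ(k,q) is directed and k is even). Then: (1) R_k ∩ (−R_k) = ∅ and R_{k/2} = R_k ∪ (−R_k); (2) consequently, if A is the adjacency matrix of Γ(k,q), then the adjacency matrix of Γ(k/2,q) equals A + Aᵀ; and (3) spectrum ℂ (A + Aᵀ) = { (2·Re(λ) : ℂ) : λ ∈ spectrum ℂ A }, i.e. Spec(Γ(k/2,q)) = 2 Re(Spec(Γ(k,q))) as sets. -/
open scoped Classical

/-!
Since `k` and `q - 1` have the same 2-adic valuation, `k * b = (q - 1) * a` with `a` and `b` odd.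
Every nonzero `k`-th power `z` satisfies `z ^ b = 1`, whereas `(-z) ^ b = -1`; hence `R_k` and
`-R_k` are disjoint. A nonzero `k/2`-th power `z` satisfies `z ^ b = ± 1`, and when the sign is
positive `z = z ^ (b + 1)` is an even power of a `k/2`-th power, so lies in `R_k`; since `-1` is
itself a `k/2`-th power, the other sign reduces to this one by passing to `-z`. Finally, the Cayley
matrix `A` of an abelian group is circulant, hence normal, so the functional calculus identifies
the spectrum of `A + Aᵀ = A + A⋆` with the set of `z + conj z` for `z` in the spectrum of `A`.
-/

section Spectrum

theorem spectrum_add_star_self {E : Type*} [TopologicalSpace E] [Ring E] [StarRing E]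
    [Algebra ℂ E] [ContinuousFunctionalCalculus ℂ E IsStarNormal] (a : E) [IsStarNormal a] :
    spectrum ℂ (a + star a) = (fun z : ℂ => ((2 * z.re : ℝ) : ℂ)) '' spectrum ℂ a := by
  have cfc_add_star : cfc (fun z : ℂ => z + star z) a = a + star a := by
    rw [cfc_add a (fun z : ℂ => z) (fun z => star z), cfc_id' ℂ a, cfc_star_id (R := ℂ) (a := a)]
  rw [← cfc_add_star, cfc_map_spectrum (fun z : ℂ => z + star z) a]
  exact Set.image_congr fun z _ => Complex.add_conj z

open scoped Matrix.Norms.L2Operator in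
theorem spectrum_matrix_add_conjTranspose {n : Type*} [Fintype n] [DecidableEq n]
    (A : Matrix n n ℂ) [IsStarNormal A] :
    spectrum ℂ (A + A.conjTranspose) =
      (fun z : ℂ => ((2 * z.re : ℝ) : ℂ)) '' spectrum ℂ A :=
  spectrum_add_star_self A

end Spectrum

section CayleyMatrix

/-- The adjacency matrix, with entries in `R`, of the Cayley digraph on `G` with connection set `S`:
there is an arc from `x` to `y` when `y - x ∈ S`. -/
noncomputable def cayleyMatrix {G : Type*} [Sub G] (R : Type*) [Zero R] [One R] (S : Set G) :
    Matrix G G R :=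
  Matrix.of fun x y => if y - x ∈ S then 1 else 0

variable {G R : Type*}

section AddGroup

variable [AddGroup G]

theorem cayleyMatrix_eq_circulant [Zero R] [One R] (S : Set G) :
    cayleyMatrix R S = Matrix.circulant ((-S).indicator 1) := by
  ext x y
  simp [cayleyMatrix, Set.indicator_apply]

theorem transpose_cayleyMatrix [Zero R] [One R] (S : Set G) :
    (cayleyMatrix R S).transpose = cayleyMatrix R (-S) := by
  ext x y
  simp [cayleyMatrix]

theorem conjTranspose_cayleyMatrix [NonAssocSemiring R] [StarRing R] (S : Set G) :
    (cayleyMatrix R S).conjTranspose = (cayleyMatrix R S).transpose := by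
  ext x y
  simp [cayleyMatrix, apply_ite star]

theorem cayleyMatrix_union_of_disjoint [AddZeroClass R] [One R] {S T : Set G}
    (hST : Disjoint S T) : cayleyMatrix R (S ∪ T) = cayleyMatrix R S + cayleyMatrix R T := by
  have hneg : Disjoint (-S) (-T) := hST.preimage _
  simp only [cayleyMatrix_eq_circulant, Set.union_neg, Set.indicator_union_of_disjoint hneg,
    ← Matrix.circulant_add, Pi.add_def]

theorem cayleyMatrix_union_neg [AddZeroClass R] [One R] {S : Set G} (hS : Disjoint S (-S)) :
    cayleyMatrix R (S ∪ -S) = cayleyMatrix R S + (cayleyMatrix R S).transpose := by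
  rw [cayleyMatrix_union_of_disjoint hS, transpose_cayleyMatrix]

end AddGroup

variable [AddCommGroup G] [Fintype G]

theorem isStarNormal_circulant [NonUnitalCommSemiring R] [StarRing R] (v : G → R) :
    IsStarNormal (Matrix.circulant v) where
  star_comm_self := by
    rw [Matrix.star_eq_conjTranspose, Matrix.conjTranspose_circulant]
    exact Matrix.circulant_mul_comm _ _

theorem spectrum_cayleyMatrix_add_transpose [DecidableEq G] (S : Set G) :
    spectrum ℂ (cayleyMatrix ℂ S + (cayleyMatrix ℂ S).transpose) =
      (fun z : ℂ => ((2 * z.re : ℝ) : ℂ)) '' spectrum ℂ (cayleyMatrix ℂ S) := by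
  have : IsStarNormal (cayleyMatrix ℂ S) :=
    cayleyMatrix_eq_circulant (R := ℂ) S ▸ isStarNormal_circulant _
  rw [← conjTranspose_cayleyMatrix, spectrum_matrix_add_conjTranspose]

end CayleyMatrix

section NonzeroPowers

/-- The set `R_k` of `k`-th powers of nonzero elements, for an arbitrary exponent `k`. -/
def nonzeroPowers (F : Type*) [MonoidWithZero F] (k : ℕ) : Set F :=
  {z | ∃ x : F, x ≠ 0 ∧ x ^ k = z}

theorem nonzeroPowers_subset_of_dvd {F : Type*} [MonoidWithZero F] [NoZeroDivisors F] {k l : ℕ}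
    (hkl : k ∣ l) : nonzeroPowers F l ⊆ nonzeroPowers F k := by
  obtain ⟨c, rfl⟩ := hkl
  rintro _ ⟨x, hx, rfl⟩
  exact ⟨x ^ c, pow_ne_zero c hx, by rw [← pow_mul, mul_comm]⟩

theorem mul_mem_nonzeroPowers {F : Type*} [CommMonoidWithZero F] [NoZeroDivisors F] {k : ℕ}
    {y z : F} (hy : y ∈ nonzeroPowers F k) (hz : z ∈ nonzeroPowers F k) :
    y * z ∈ nonzeroPowers F k := by
  obtain ⟨u, hu, rfl⟩ := hy
  obtain ⟨v, hv, rfl⟩ := hz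
  exact ⟨u * v, mul_ne_zero hu hv, mul_pow u v k⟩

theorem neg_mem_nonzeroPowers {F : Type*} [CommRing F] [NoZeroDivisors F] {k : ℕ} {z : F}
    (hneg_one : -1 ∈ nonzeroPowers F k) (hz : z ∈ nonzeroPowers F k) :
    -z ∈ nonzeroPowers F k :=
  neg_one_mul z ▸ mul_mem_nonzeroPowers hneg_one hz

theorem mem_nonzeroPowers_two_mul_of_pow_eq_one {F : Type*} [MonoidWithZero F] [NoZeroDivisors F]
    {j b : ℕ} {z : F} (hz : z ∈ nonzeroPowers F j) (hb : Odd b) (hzb : z ^ b = 1) :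
    z ∈ nonzeroPowers F (2 * j) := by
  obtain ⟨x, hx, rfl⟩ := hz
  obtain ⟨t, rfl⟩ := hb
  refine ⟨x ^ (t + 1), pow_ne_zero _ hx, ?_⟩
  calc (x ^ (t + 1)) ^ (2 * j) = (x ^ j) ^ (2 * t + 1) * x ^ j := by
        simp only [← pow_mul, ← pow_add]; congr 1; ring
    _ = x ^ j := by rw [hzb, one_mul]

variable {F : Type*} [Field F] [Fintype F] {a b j k : ℕ}

theorem pow_eq_one_of_mem_nonzeroPowers (hkb : Fintype.card F - 1 ∣ k * b) {z : F}
    (hz : z ∈ nonzeroPowers F k) : z ^ b = 1 := by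
  obtain ⟨x, hx, rfl⟩ := hz
  rw [← pow_mul, ← orderOf_dvd_iff_pow_eq_one]
  exact (orderOf_dvd_of_pow_eq_one (FiniteField.pow_card_sub_one_eq_one x hx)).trans hkb

theorem disjoint_nonzeroPowers_neg (hF : ringChar F ≠ 2) (hb : Odd b)
    (hkb : Fintype.card F - 1 ∣ k * b) : Disjoint (nonzeroPowers F k) (-nonzeroPowers F k) := by
  refine Set.disjoint_left.mpr fun z hz hneg => Ring.neg_one_ne_one_of_char_ne_two hF ?_
  calc (-1 : F) = (-z) ^ b := by rw [hb.neg_pow, pow_eq_one_of_mem_nonzeroPowers hkb hz]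
    _ = 1 := pow_eq_one_of_mem_nonzeroPowers hkb hneg

theorem neg_one_mem_nonzeroPowers_card_half (hF : ringChar F ≠ 2) :
    (-1 : F) ∈ nonzeroPowers F (Fintype.card F / 2) := by
  obtain ⟨w, hw⟩ := FiniteField.exists_nonsquare hF
  have hw0 : w ≠ 0 := by
    rintro rfl
    exact hw IsSquare.zero
  exact ⟨w, hw0, (FiniteField.pow_dichotomy hF hw0).resolve_left
    fun h => hw ((FiniteField.isSquare_iff hF hw0).mpr h)⟩

theorem neg_one_mem_nonzeroPowers (hF : ringChar F ≠ 2) (ha : Odd a)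
    (hjb : j * b = Fintype.card F / 2 * a) : (-1 : F) ∈ nonzeroPowers F j := by
  obtain ⟨w, hw0, hw⟩ := neg_one_mem_nonzeroPowers_card_half hF
  refine nonzeroPowers_subset_of_dvd ⟨b, rfl⟩ ⟨w, hw0, ?_⟩
  rw [hjb, pow_mul, hw, ha.neg_one_pow]

theorem nonzeroPowers_eq_union_neg (hF : ringChar F ≠ 2) (ha : Odd a) (hb : Odd b)
    (hjb : j * b = Fintype.card F / 2 * a) :
    nonzeroPowers F j = nonzeroPowers F (2 * j) ∪ -nonzeroPowers F (2 * j) := by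
  have hneg_one : (-1 : F) ∈ nonzeroPowers F j := neg_one_mem_nonzeroPowers hF ha hjb
  have hsub : nonzeroPowers F (2 * j) ⊆ nonzeroPowers F j :=
    nonzeroPowers_subset_of_dvd (Dvd.intro_left 2 rfl)
  have hcard : 2 * (Fintype.card F / 2) = Fintype.card F - 1 :=
    Nat.two_mul_odd_div_two (FiniteField.odd_card_of_char_ne_two hF)
  have hdvd : Fintype.card F - 1 ∣ j * (b * 2) :=
    ⟨a, by rw [← hcard, ← mul_assoc, hjb, mul_comm, mul_assoc]⟩
  refine Set.Subset.antisymm (fun z hz => ?_) (Set.union_subset hsub fun z hz => ?_)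
  · have hsq : (z ^ b) ^ 2 = 1 := by rw [← pow_mul, pow_eq_one_of_mem_nonzeroPowers hdvd hz]
    rcases sq_eq_one_iff.mp hsq with h | h
    · exact .inl (mem_nonzeroPowers_two_mul_of_pow_eq_one hz hb h)
    · refine .inr (mem_nonzeroPowers_two_mul_of_pow_eq_one
        (neg_mem_nonzeroPowers hneg_one hz) hb ?_)
      rw [hb.neg_pow, h, neg_neg]
  · exact neg_neg z ▸ neg_mem_nonzeroPowers hneg_one (hsub hz)

end NonzeroPowers

section Valuation

theorem exists_mul_eq_mul_of_padicValNat_eq {p k n : ℕ} (hp : p.Prime) (hk : k ≠ 0) (hn : n ≠ 0)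
    (hval : padicValNat p k = padicValNat p n) : ∃ a b, ¬p ∣ a ∧ ¬p ∣ b ∧ k * b = n * a := by
  refine ⟨ordCompl[p] k, ordCompl[p] n, Nat.not_dvd_ordCompl hp hk, Nat.not_dvd_ordCompl hp hn, ?_⟩
  have hproj : ordProj[p] k = ordProj[p] n := by
    rw [Nat.factorization_def k hp, Nat.factorization_def n hp, hval]
  calc k * ordCompl[p] n = ordProj[p] k * ordCompl[p] k * ordCompl[p] n := by
        rw [Nat.ordProj_mul_ordCompl_eq_self]
    _ = ordProj[p] n * ordCompl[p] n * ordCompl[p] k := by rw [hproj, mul_right_comm]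
    _ = n * ordCompl[p] k := by rw [Nat.ordProj_mul_ordCompl_eq_self]

theorem exists_odd_half_mul_eq_of_padicValNat_two_eq {k n : ℕ} (hn : n ≠ 0)
    (hval : padicValNat 2 k = padicValNat 2 (2 * n)) :
    ∃ j a b, k = 2 * j ∧ Odd a ∧ Odd b ∧ j * b = n * a := by
  have hn2 : 2 * n ≠ 0 := mul_ne_zero two_ne_zero hn
  have hval_pos : 1 ≤ padicValNat 2 k := hval ▸ one_le_padicValNat_of_dvd hn2 ⟨n, rfl⟩
  have hk : k ≠ 0 := by
    rintro rfl
    simp at hval_pos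
  obtain ⟨j, rfl⟩ : 2 ∣ k := dvd_of_one_le_padicValNat hval_pos
  obtain ⟨a, b, ha, hb, hab⟩ := exists_mul_eq_mul_of_padicValNat_eq Nat.prime_two hk hn2 hval
  exact ⟨j, a, b, rfl, Nat.odd_iff.mpr (by lia), Nat.odd_iff.mpr (by lia), by lia⟩

end Valuation

theorem gpGraph_directed_symmetrization_general {F : Type*} [Field F] [Fintype F] [DecidableEq F]
    (hodd : Odd (Fintype.card F)) {k : ℕ}
    (hval : padicValNat 2 k = padicValNat 2 (Fintype.card F - 1)) :
    nonzeroPowers F k ∩ -nonzeroPowers F k = ∅ ∧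
    nonzeroPowers F (k / 2) = nonzeroPowers F k ∪ -nonzeroPowers F k ∧
    cayleyMatrix ℂ (nonzeroPowers F (k / 2)) =
      cayleyMatrix ℂ (nonzeroPowers F k) + (cayleyMatrix ℂ (nonzeroPowers F k)).transpose ∧
    spectrum ℂ (cayleyMatrix ℂ (nonzeroPowers F (k / 2))) =
      (fun z : ℂ => ((2 * z.re : ℝ) : ℂ)) '' spectrum ℂ (cayleyMatrix ℂ (nonzeroPowers F k)) := by
  have hodd_mod : Fintype.card F % 2 = 1 := Nat.odd_iff.mp hodd
  have hF : ringChar F ≠ 2 := fun h => by simp [FiniteField.even_card_of_char_two h] at hodd_mod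
  have hcard : 2 * (Fintype.card F / 2) = Fintype.card F - 1 := Nat.two_mul_odd_div_two hodd_mod
  have hhalf : Fintype.card F / 2 ≠ 0 := by
    have := Fintype.one_lt_card (α := F)
    lia
  obtain ⟨j, a, b, rfl, ha, hb, hjb⟩ :=
    exists_odd_half_mul_eq_of_padicValNat_two_eq hhalf (hcard.symm ▸ hval)
  rw [Nat.mul_div_cancel_left j two_pos]
  have hdisj : Disjoint (nonzeroPowers F (2 * j)) (-nonzeroPowers F (2 * j)) :=
    disjoint_nonzeroPowers_neg hF hb ⟨a, by rw [← hcard, mul_assoc, hjb, mul_assoc]⟩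
  have hunion := nonzeroPowers_eq_union_neg hF ha hb hjb
  have hadj := cayleyMatrix_union_neg (R := ℂ) hdisj
  rw [← hunion] at hadj
  exact ⟨hdisj.inter_eq, hunion, hadj, hadj ▸ spectrum_cayleyMatrix_add_transpose _⟩

theorem gpGraph_directed_symmetrization
    (p m k : ℕ) (hp : p.Prime) (hodd : Odd p) (hm : 1 ≤ m)
    (F : Type*) [Field F] [Fintype F] [DecidableEq F]
    (hF : Fintype.card F = p ^ m)
    (hk : 0 < k) (hkdvd : k ∣ p ^ m - 1)
    (hval : padicValNat 2 k = padicValNat 2 (p ^ m - 1))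
    (Rk Rk2 : Set F)
    (hRk : Rk = {z : F | ∃ x : F, x ≠ 0 ∧ x ^ k = z})
    (hRk2 : Rk2 = {z : F | ∃ x : F, x ≠ 0 ∧ x ^ (k / 2) = z})
    (A B : Matrix F F ℂ)
    (hA : ∀ x y : F, A x y = if y - x ∈ Rk then 1 else 0)
    (hB : ∀ x y : F, B x y = if y - x ∈ Rk2 then 1 else 0) :
    Rk ∩ (-Rk) = ∅ ∧
    Rk2 = Rk ∪ (-Rk) ∧
    B = A + A.transpose ∧
    spectrum ℂ B = (fun z : ℂ => ((2 * z.re : ℝ) : ℂ)) '' spectrum ℂ A := by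
  obtain ⟨rfl, rfl⟩ : A = cayleyMatrix ℂ Rk ∧ B = cayleyMatrix ℂ Rk2 :=
    ⟨Matrix.ext hA, Matrix.ext hB⟩
  subst hRk hRk2
  exact gpGraph_directed_symmetrization_general (hF ▸ hodd.pow) (hF ▸ hval)
end
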